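/- Connection relation for Gegenbauer polynomials: for n ∈ ℕ₀, ν, μ ∈ (−1/2, ∞) \ {0}, and all x, C_n^ν(x) = ((2ν)_n/(ν+1/2)_n) Σ_{k=0}^n [ (ν+k+1/2)_{n−k} (2ν+n)_k (μ+1/2)_k Γ(2μ+k) ] / [ (n−k)! (2μ)_k Γ(2μ+2k) ] · ₃F₂(−n+k, n+k+2ν, μ+k+1/2; ν+k+1/2, 2μ+2k+1; 1) · C_k^μ(x). -/

import Mathlib

open Complex

/-- Pochhammer symbol (rising factorial) `(a)_k = a (a+1) ⋯ (a+k-1)`. -/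
noncomputable def poch (a : ℂ) (k : ℕ) : ℂ := ∏ i ∈ Finset.range k, (a + (i : ℂ))

/-- Gauss hypergeometric function `₂F₁(a,b;c;w)` as a series. -/
noncomputable def hyp2F1 (a b c w : ℂ) : ℂ :=
  ∑' k : ℕ, poch a k * poch b k / (poch c k * (Nat.factorial k : ℂ)) * w ^ k

/-- Terminating generalized hypergeometric function `₃F₂(-m,a₂,a₃;b₁,b₂;1)`. -/
noncomputable def hyp3F2 (m : ℕ) (a2 a3 b1 b2 : ℂ) : ℂ :=
  ∑ j ∈ Finset.range (m + 1),
    poch (-(m : ℂ)) j * poch a2 j * poch a3 j /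
      (poch b1 j * poch b2 j * (Nat.factorial j : ℂ))

/-- Gegenbauer polynomial `C_n^μ(x)`. -/
noncomputable def gegenbauerC (n : ℕ) (μ : ℂ) (x : ℂ) : ℂ :=
  poch (2 * μ) n / (Nat.factorial n : ℂ) *
    ∑ j ∈ Finset.range (n + 1),
      poch (-(n : ℂ)) j * poch ((n : ℂ) + 2 * μ) j /
          (poch (μ + 1 / 2) j * (Nat.factorial j : ℂ)) * ((1 - x) / 2) ^ j

/-- Associated Legendre function of the second kind `Q_ν^μ(z)` (principal branches). -/
noncomputable def legendreQ (ν μ z : ℂ) : ℂ :=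
  (Real.sqrt Real.pi : ℂ) * Complex.exp (Real.pi * I * μ) * Complex.Gamma (ν + μ + 1) *
      (z ^ 2 - 1) ^ (μ / 2) /
      ((2 : ℂ) ^ (ν + 1) * Complex.Gamma (ν + 3 / 2) * z ^ (ν + μ + 1)) *
    hyp2F1 ((ν + μ + 2) / 2) ((ν + μ + 1) / 2) (ν + 3 / 2) (1 / z ^ 2)

/-- Legendre polynomial `P_n(x)`. -/
noncomputable def legendrePoly (n : ℕ) (x : ℂ) : ℂ :=
  ∑ j ∈ Finset.range (n + 1),
    poch (-(n : ℂ)) j * poch ((n : ℂ) + 1) j / (poch 1 j * (Nat.factorial j : ℂ)) *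
      ((1 - x) / 2) ^ j

/-- Chebyshev polynomial of the second kind `U_n(x)`. -/
noncomputable def chebyshevU (n : ℕ) (x : ℂ) : ℂ :=
  ((n : ℂ) + 1) *
    ∑ j ∈ Finset.range (n + 1),
      poch (-(n : ℂ)) j * poch ((n : ℂ) + 2) j / (poch (3 / 2) j * (Nat.factorial j : ℂ)) *
        ((1 - x) / 2) ^ j

/-!
In the variable `y = (1 - x) / 2` both sides are Jacobi polynomials `₂F₁(-n, n + a; c; y)`. A
telescoping sum inverts the matrix of their coefficients, which writes `y ^ j` as an explicit
combination of the polynomials with parameters `(a, c)`. Inserting this into the polynomial with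
parameters `(b, d)` and exchanging the summations, the coefficients become terminating `₃F₂(1)`.
The Gegenbauer polynomials are the case `a = 2μ`, `c = μ + 1/2`.
-/

section Pochhammer

lemma poch_succ (a : ℂ) (k : ℕ) : poch a (k + 1) = poch a k * (a + k) :=
  Finset.prod_range_succ _ k

lemma poch_eq_ascPochhammer_eval (a : ℂ) (k : ℕ) : poch a k = (ascPochhammer ℂ k).eval a := by
  induction k with
  | zero => simp [poch]
  | succ k ih => rw [ascPochhammer_succ_eval, ← ih, poch_succ]

lemma poch_add (a : ℂ) (m n : ℕ) : poch a (m + n) = poch a m * poch (a + m) n := by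
  simp [poch_eq_ascPochhammer_eval, ← ascPochhammer_mul]

lemma poch_succ_left (a : ℂ) (k : ℕ) : poch a (k + 1) = a * poch (a + 1) k := by
  rw [add_comm k, poch_add]
  simp [poch]

lemma poch_neg_natCast (n j : ℕ) :
    poch (-(n : ℂ)) j = (-1) ^ j * (n.choose j : ℂ) * (j.factorial : ℂ) := by
  rw [poch_eq_ascPochhammer_eval, ascPochhammer_eval_neg_eq_descPochhammer,
    descPochhammer_eval_eq_descFactorial, Nat.descFactorial_eq_factorial_mul_choose]
  push_cast
  ring

lemma poch_ne_zero {a : ℂ} (ha : ∀ i : ℕ, a ≠ -i) (k : ℕ) : poch a k ≠ 0 :=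
  Finset.prod_ne_zero_iff.mpr fun i _ h ↦ ha i (eq_neg_of_add_eq_zero_left h)

lemma add_natCast_ne_neg_natCast {a : ℂ} (ha : ∀ i : ℕ, a ≠ -i) (m i : ℕ) : a + m ≠ -i := by
  intro h
  apply ha (m + i)
  push_cast
  linear_combination h

lemma poch_div_poch_add {a : ℂ} (m n : ℕ) (ha : poch a m ≠ 0) :
    poch a m / poch a (m + n) = 1 / poch (a + m) n := by
  rw [poch_add, div_mul_cancel_left₀ ha, one_div]

lemma add_div_poch_add_succ {a : ℂ} (k i : ℕ) (ha : a + k ≠ 0) :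
    (a + k) / poch a (k + i + 1) = 1 / (poch a k * poch (a + k + 1) i) := by
  rw [add_assoc k, poch_add, poch_succ_left, mul_left_comm, div_mul_cancel_left₀ ha, one_div]

lemma Gamma_add_natCast {a : ℂ} (ha : ∀ i : ℕ, a ≠ -i) (n : ℕ) :
    Gamma (a + n) = poch a n * Gamma a := by
  rw [poch_eq_ascPochhammer_eval, ← Gamma_add_nat_div_Gamma_eq a ha,
    div_mul_cancel₀ _ (Gamma_ne_zero ha)]

end Pochhammer

section FiniteSums

lemma sum_range_sum_range_succ_comm {M : Type*} [AddCommMonoid M] (n : ℕ) (f : ℕ → ℕ → M) :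
    ∑ j ∈ Finset.range (n + 1), ∑ k ∈ Finset.range (j + 1), f k j =
      ∑ k ∈ Finset.range (n + 1), ∑ i ∈ Finset.range (n - k + 1), f k (k + i) := by
  calc
    _ = ∑ j ∈ Finset.range (n + 1), ∑ k ∈ Finset.range (j + 1), f k (k + (j - k)) := by
      refine Finset.sum_congr rfl fun j _ ↦ Finset.sum_congr rfl fun k hk ↦ ?_
      rw [Nat.add_sub_cancel' (Finset.mem_range_succ_iff.mp hk)]
    _ = ∑ k ∈ Finset.range (n + 1), ∑ i ∈ Finset.range (n + 1 - k), f k (k + i) :=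
      Finset.sum_range_diag_flip (n + 1) fun k i ↦ f k (k + i)
    _ = _ := by
      refine Finset.sum_congr rfl fun k hk ↦ ?_
      rw [Nat.sub_add_comm (Finset.mem_range_succ_iff.mp hk)]

lemma cast_succ_mul_choose_succ {R : Type*} [CommRing R] (N L : ℕ) :
    ((L : R) + 1) * (N.choose (L + 1) : R) = ((N : R) - L) * (N.choose L : R) := by
  have h : N.choose (L + 1) * (L + 1) + N.choose L * L = N.choose L * N := by
    rcases le_or_gt L N with hL | hL
    · rw [Nat.choose_succ_right_eq, ← mul_add, Nat.sub_add_cancel hL]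
    · simp [Nat.choose_eq_zero_of_lt hL, Nat.choose_eq_zero_of_lt (hL.trans L.lt_succ_self)]
  have h_cast := congrArg (Nat.cast : ℕ → R) h
  push_cast at h_cast
  linear_combination h_cast

lemma cast_choose_add_mul_choose {R : Type*} [Semiring R] (n k i : ℕ) :
    (n.choose (k + i) : R) * ((k + i).choose k : R) =
      (n.choose k : R) * ((n - k).choose i : R) := by
  rw [← Nat.cast_mul, Nat.choose_mul (Nat.le_add_right k i), Nat.add_sub_cancel_left,
    Nat.cast_mul]

lemma neg_one_pow_add_mul_neg_one_pow {R : Type*} [Ring R] (k i : ℕ) :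
    (-1 : R) ^ (k + i) * (-1) ^ k = (-1) ^ i := by
  rw [add_comm, pow_add, mul_assoc, ← pow_add, Even.neg_one_pow ⟨k, rfl⟩, mul_one]

variable {b : ℂ}

lemma mul_sum_alternating_choose_div_poch (hb : ∀ i : ℕ, b ≠ -i) (N L : ℕ) :
    (N : ℂ) * ∑ l ∈ Finset.range L,
        (-1) ^ l * (N.choose l : ℂ) * ((b + 2 * l) / poch (b + l) (N + 1)) =
      -((-1) ^ L * L * (N.choose L : ℂ) / poch (b + L) N) := by
  induction L with
  | zero => simp
  | succ L ih =>
    have hL := add_natCast_ne_neg_natCast hb L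
    have hbL : b + L ≠ 0 := by simpa using hL 0
    have hbLN : b + L + N ≠ 0 := by simpa using add_natCast_ne_neg_natCast hL N 0
    have hP : poch (b + L) N ≠ 0 := poch_ne_zero hL N
    have hshift : poch (b + L + 1) N = poch (b + L) N * (b + L + N) / (b + L) := by
      rw [eq_div_iff hbL, mul_comm, ← poch_succ_left, poch_succ]
    rw [Finset.sum_range_succ, mul_add, ih, poch_succ, Nat.cast_succ, ← add_assoc, hshift]
    field_simp
    linear_combination -(-1 : ℂ) ^ L * (b + L) * cast_succ_mul_choose_succ (R := ℂ) N L

lemma sum_alternating_choose_div_poch (hb : ∀ i : ℕ, b ≠ -i) (N : ℕ) :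
    ∑ l ∈ Finset.range (N + 1),
        (-1) ^ l * (N.choose l : ℂ) * ((b + 2 * l) / poch (b + l) (N + 1)) =
      if N = 0 then 1 else 0 := by
  split_ifs with hN
  · have hb0 : b ≠ 0 := by simpa using hb 0
    simp [hN, poch, hb0]
  · have h := mul_sum_alternating_choose_div_poch hb N (N + 1)
    simpa [hN] using h

end FiniteSums

section Hypergeometric

lemma hyp3F2_eq_sum_choose (m : ℕ) (a₂ a₃ b₁ b₂ : ℂ) :
    hyp3F2 m a₂ a₃ b₁ b₂ =
      ∑ i ∈ Finset.range (m + 1),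
        (-1) ^ i * (m.choose i : ℂ) * (poch a₂ i * poch a₃ i / (poch b₁ i * poch b₂ i)) := by
  refine Finset.sum_congr rfl fun i _ ↦ ?_
  have hi : (i.factorial : ℂ) ≠ 0 := Nat.cast_ne_zero.mpr i.factorial_ne_zero
  rw [poch_neg_natCast, ← mul_div_mul_right _ (poch b₁ i * poch b₂ i) hi]
  ring

/-- The Jacobi polynomial `₂F₁(-n, n + a; c; y)`, which is
`n! / (α + 1)_n * P_n^(α, β)(1 - 2 * y)` for `c = α + 1` and `a = α + β + 1`. These parameters
make the connection coefficients explicit for arbitrary `α` and `β`. -/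
noncomputable def shiftedJacobi (n : ℕ) (a c y : ℂ) : ℂ :=
  ∑ j ∈ Finset.range (n + 1),
    poch (-(n : ℂ)) j * poch (n + a) j / (poch c j * (j.factorial : ℂ)) * y ^ j

lemma gegenbauerC_eq_shiftedJacobi (n : ℕ) (μ x : ℂ) :
    gegenbauerC n μ x =
      poch (2 * μ) n / (n.factorial : ℂ) * shiftedJacobi n (2 * μ) (μ + 1 / 2) ((1 - x) / 2) :=
  rfl

lemma shiftedJacobi_eq_sum_choose (n : ℕ) (a c y : ℂ) :
    shiftedJacobi n a c y =
      ∑ j ∈ Finset.range (n + 1),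
        (-1) ^ j * (n.choose j : ℂ) * (poch (a + n) j / poch c j) * y ^ j := by
  refine Finset.sum_congr rfl fun j _ ↦ ?_
  have hj : (j.factorial : ℂ) ≠ 0 := Nat.cast_ne_zero.mpr j.factorial_ne_zero
  rw [poch_neg_natCast, add_comm a, ← mul_div_mul_right _ (poch c j) hj]
  ring

variable {a : ℂ}

lemma inversion_summand_eq (ha : ∀ i : ℕ, a ≠ -i) (m N l : ℕ) (c : ℂ) :
    (-1) ^ (m + l) * ((m + N).choose (m + l) : ℂ) *
        ((a + 2 * (m + l : ℕ)) / poch (a + (m + l : ℕ)) (m + N + 1)) *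
        ((-1) ^ m * ((m + l).choose m : ℂ) * (poch (a + (m + l : ℕ)) m / poch c m)) =
      ((m + N).choose m : ℂ) / poch c m *
        ((-1) ^ l * (N.choose l : ℂ) *
          ((a + 2 * m + 2 * l) / poch (a + 2 * m + l) (N + 1))) := by
  have hchoose := cast_choose_add_mul_choose (R := ℂ) (m + N) m l
  rw [Nat.add_sub_cancel_left] at hchoose
  have hpoch : poch (a + (m + l : ℕ)) m / poch (a + (m + l : ℕ)) (m + N + 1) =
      1 / poch (a + 2 * m + l) (N + 1) := by
    rw [add_assoc m, poch_div_poch_add m (N + 1)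
      (poch_ne_zero (add_natCast_ne_neg_natCast ha (m + l)) m)]
    push_cast
    ring_nf
  calc
    _ = ((-1) ^ (m + l) * (-1) ^ m) *
          (((m + N).choose (m + l) : ℂ) * ((m + l).choose m : ℂ)) *
          (a + 2 * (m + l : ℕ)) / poch c m *
          (poch (a + (m + l : ℕ)) m / poch (a + (m + l : ℕ)) (m + N + 1)) := by ring
    _ = _ := by
      rw [neg_one_pow_add_mul_neg_one_pow, hchoose, hpoch]
      push_cast
      ring

lemma sum_choose_mul_shiftedJacobi (ha : ∀ i : ℕ, a ≠ -i) (j : ℕ) (c y : ℂ) :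
    ∑ k ∈ Finset.range (j + 1),
      (-1) ^ k * (j.choose k : ℂ) * ((a + 2 * k) / poch (a + k) (j + 1)) *
        shiftedJacobi k a c y =
      y ^ j / poch c j := by
  let term (m k : ℕ) : ℂ :=
    (-1) ^ k * (j.choose k : ℂ) * ((a + 2 * k) / poch (a + k) (j + 1)) *
      ((-1) ^ m * (k.choose m : ℂ) * (poch (a + k) m / poch c m)) * y ^ m
  have coeff_eq : ∀ m ∈ Finset.range (j + 1),
      ∑ l ∈ Finset.range (j - m + 1), term m (m + l) = if m = j then y ^ j / poch c j else 0 := by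
    intro m hm
    obtain ⟨N, rfl⟩ := Nat.exists_eq_add_of_le (Finset.mem_range_succ_iff.mp hm)
    have hb : ∀ i : ℕ, a + 2 * m ≠ -i := by
      simpa using add_natCast_ne_neg_natCast ha (2 * m)
    simp only [term, inversion_summand_eq ha, ← Finset.sum_mul, ← Finset.mul_sum,
      Nat.add_sub_cancel_left, sum_alternating_choose_div_poch hb]
    rcases eq_or_ne N 0 with rfl | hN
    · simp [div_eq_inv_mul]
    · simp [hN]
  calc
    _ = ∑ k ∈ Finset.range (j + 1), ∑ m ∈ Finset.range (k + 1), term m k := by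
      simp_rw [shiftedJacobi_eq_sum_choose, Finset.mul_sum, term, mul_assoc]
    _ = ∑ m ∈ Finset.range (j + 1), ∑ l ∈ Finset.range (j - m + 1), term m (m + l) :=
      sum_range_sum_range_succ_comm j term
    _ = ∑ m ∈ Finset.range (j + 1), if m = j then y ^ j / poch c j else 0 :=
      Finset.sum_congr rfl coeff_eq
    _ = y ^ j / poch c j := by simp

lemma connection_summand_eq {k : ℕ} (ha : a + 2 * k ≠ 0) (n i : ℕ) (b c d : ℂ) :
    (-1) ^ (k + i) * (n.choose (k + i) : ℂ) * (poch (b + n) (k + i) / poch d (k + i)) *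
        poch c (k + i) *
        ((-1) ^ k * ((k + i).choose k : ℂ) * ((a + 2 * k) / poch (a + k) (k + i + 1))) =
      (n.choose k : ℂ) * (poch (b + n) k * poch c k / (poch d k * poch (a + k) k)) *
        ((-1) ^ i * ((n - k).choose i : ℂ) *
          (poch (n + k + b) i * poch (c + k) i / (poch (d + k) i * poch (a + 2 * k + 1) i))) := by
  have h_two_mul : a + 2 * k = a + k + k := by ring
  have hpoch : (a + 2 * k) / poch (a + k) (k + i + 1) =
      1 / (poch (a + k) k * poch (a + 2 * k + 1) i) := by
    rw [h_two_mul] at ha ⊢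
    exact add_div_poch_add_succ k i ha
  have hb : b + n + k = n + k + b := by ring
  rw [hpoch, poch_add (b + n), poch_add d, poch_add c, hb]
  calc
    _ = ((-1) ^ (k + i) * (-1) ^ k) * ((n.choose (k + i) : ℂ) * ((k + i).choose k : ℂ)) *
          (poch (b + n) k * poch c k / (poch d k * poch (a + k) k)) *
          (poch (n + k + b) i * poch (c + k) i /
            (poch (d + k) i * poch (a + 2 * k + 1) i)) := by ring
    _ = _ := by
      rw [neg_one_pow_add_mul_neg_one_pow, cast_choose_add_mul_choose]
      ring

lemma shiftedJacobi_connection {c : ℂ} (ha : ∀ i : ℕ, a ≠ -i) (hc : ∀ i : ℕ, c ≠ -i)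
    (n : ℕ) (b d y : ℂ) :
    shiftedJacobi n b d y =
      ∑ k ∈ Finset.range (n + 1),
        (n.choose k : ℂ) * (poch (b + n) k * poch c k / (poch d k * poch (a + k) k)) *
          hyp3F2 (n - k) (n + k + b) (c + k) (d + k) (a + 2 * k + 1) *
          shiftedJacobi k a c y := by
  let term (k j : ℕ) : ℂ :=
    (-1) ^ j * (n.choose j : ℂ) * (poch (b + n) j / poch d j) * poch c j *
      ((-1) ^ k * (j.choose k : ℂ) * ((a + 2 * k) / poch (a + k) (j + 1))) *
      shiftedJacobi k a c y
  have pow_eq (j : ℕ) : y ^ j = poch c j * (y ^ j / poch c j) :=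
    (mul_div_cancel₀ _ (poch_ne_zero hc j)).symm
  calc
    _ = ∑ j ∈ Finset.range (n + 1), ∑ k ∈ Finset.range (j + 1), term k j := by
      rw [shiftedJacobi_eq_sum_choose]
      refine Finset.sum_congr rfl fun j _ ↦ ?_
      rw [pow_eq, ← sum_choose_mul_shiftedJacobi ha]
      simp_rw [Finset.mul_sum, term, mul_assoc]
    _ = ∑ k ∈ Finset.range (n + 1), ∑ i ∈ Finset.range (n - k + 1), term k (k + i) :=
      sum_range_sum_range_succ_comm n term
    _ = _ := by
      refine Finset.sum_congr rfl fun k _ ↦ ?_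
      have h_two_k : a + 2 * k ≠ 0 := by simpa using add_natCast_ne_neg_natCast ha (2 * k) 0
      simp only [term, connection_summand_eq h_two_k, ← Finset.sum_mul, ← Finset.mul_sum,
        hyp3F2_eq_sum_choose]

end Hypergeometric

theorem gegenbauer_connection_relation_general
    (n : ℕ) (ν μ : ℂ) (hν : ∀ i : ℕ, ν + 1 / 2 ≠ -i) (hμ : ∀ i : ℕ, 2 * μ ≠ -i) (x : ℂ) :
    gegenbauerC n ν x =
      poch (2 * ν) n / poch (ν + 1 / 2) n *
        ∑ k ∈ Finset.range (n + 1),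
          poch (ν + k + 1 / 2) (n - k) * poch (2 * ν + n) k *
              poch (μ + 1 / 2) k * Gamma (2 * μ + k) /
              (((n - k).factorial : ℂ) * poch (2 * μ) k * Gamma (2 * μ + 2 * k)) *
            hyp3F2 (n - k) (n + k + 2 * ν) (μ + k + 1 / 2) (ν + k + 1 / 2) (2 * μ + 2 * k + 1) *
            gegenbauerC k μ x := by
  have hμ' : ∀ i : ℕ, μ + 1 / 2 ≠ -i := by
    intro i h
    apply hμ (2 * i + 1)
    push_cast
    linear_combination 2 * h
  rw [gegenbauerC_eq_shiftedJacobi, shiftedJacobi_connection hμ hμ', Finset.mul_sum,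
    Finset.mul_sum]
  refine Finset.sum_congr rfl fun k hk ↦ ?_
  have hkn : k ≤ n := Finset.mem_range_succ_iff.mp hk
  have hμk := add_natCast_ne_neg_natCast hμ k
  have hGamma : Gamma (2 * μ + 2 * k) = poch (2 * μ + k) k * Gamma (2 * μ + k) := by
    rw [← Gamma_add_natCast hμk, two_mul (k : ℂ), add_assoc]
  have hpoch : poch (ν + 1 / 2) n = poch (ν + 1 / 2) k * poch (ν + 1 / 2 + k) (n - k) := by
    rw [← poch_add, Nat.add_sub_cancel' hkn]
  have hn : (n.factorial : ℂ) ≠ 0 := Nat.cast_ne_zero.mpr n.factorial_ne_zero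
  have hGamma_ne := Gamma_ne_zero hμk
  have hμ_ne := poch_ne_zero hμ k
  have hν_ne := poch_ne_zero (add_natCast_ne_neg_natCast hν k) (n - k)
  rw [gegenbauerC_eq_shiftedJacobi, hGamma, hpoch, Nat.cast_choose ℂ hkn, add_right_comm ν k,
    add_right_comm μ k]
  generalize ν + 1 / 2 = g at *
  field_simp

lemma ofReal_add_half_ne_neg_natCast {t : ℝ} (ht : -(1 / 2) < t) (i : ℕ) :
    (t : ℂ) + 1 / 2 ≠ -i := by
  intro h
  have hi : t + 1 / 2 = -i := ofReal_injective (by simpa using h)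
  have : (0 : ℝ) ≤ i := i.cast_nonneg
  linarith

lemma two_mul_ofReal_ne_neg_natCast {t : ℝ} (ht : -(1 / 2) < t) (ht0 : t ≠ 0) (i : ℕ) :
    2 * (t : ℂ) ≠ -i := by
  intro h
  have hi : 2 * t = -i := by exact_mod_cast h
  rcases i with _ | i
  · exact ht0 (by simpa using hi)
  · have : (0 : ℝ) ≤ i := i.cast_nonneg
    push_cast at hi
    linarith

/-- connection relation expressing `C_n^ν` as a sum over `C_k^μ`. -/
theorem gegenbauer_connection_relation
    (n : ℕ) (ν μ : ℝ) (hν1 : -(1 / 2) < ν) (hν2 : ν ≠ 0)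
    (hμ1 : -(1 / 2) < μ) (hμ2 : μ ≠ 0) (x : ℂ) :
    gegenbauerC n (ν : ℂ) x =
      poch (2 * (ν : ℂ)) n / poch ((ν : ℂ) + 1 / 2) n *
        ∑ k ∈ Finset.range (n + 1),
          poch ((ν : ℂ) + (k : ℂ) + 1 / 2) (n - k) * poch (2 * (ν : ℂ) + (n : ℂ)) k *
              poch ((μ : ℂ) + 1 / 2) k * Complex.Gamma (2 * (μ : ℂ) + (k : ℂ)) /
              ((Nat.factorial (n - k) : ℂ) * poch (2 * (μ : ℂ)) k *
                Complex.Gamma (2 * (μ : ℂ) + 2 * (k : ℂ))) *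
            hyp3F2 (n - k) ((n : ℂ) + (k : ℂ) + 2 * (ν : ℂ)) ((μ : ℂ) + (k : ℂ) + 1 / 2)
              ((ν : ℂ) + (k : ℂ) + 1 / 2) (2 * (μ : ℂ) + 2 * (k : ℂ) + 1) *
            gegenbauerC k (μ : ℂ) x :=
  gegenbauer_connection_relation_general n ν μ (ofReal_add_half_ne_neg_natCast hν1)
    (two_mul_ofReal_ne_neg_natCast hμ1 hμ2) x
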